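/- arXiv:2408.03530 — 2 statements merged into one kernel-verified Lean document; each statement's English description precedes it below -/
import Mathlib

section
/- Assume RA, ER and MON (D₁ ≥ D₀ almost surely), and P(D=1 | Z=1) = P(D=1 | Z=0). Then p_c = p_df = 0, p_a = P(D=1), p_n = P(D=0), and the testable implications hold with equality: for every Borel set A ⊆ ℝ and each d ∈ {0,1}, P(Y∈A, D=d | Z=1) = P(Y∈A, D=d | Z=0); that is, (Y, D) is independent of Z. -/
/-!
By random assignment `D₁` and `D₀` have the same law as the observed treatment in the two arms of
the instrument, so equality of the first stages reads `P (D₁ = 1) = P (D₀ = 1)`. Monotonicity says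
`{D₀ = 1} ⊆ {D₁ = 1}` up to a null set, and nested events of equal finite measure coincide almost
surely: `D₀ = D₁`, leaving neither compliers nor defiers. With the exclusion restriction, the
instrument then affects neither treatment nor outcome, so `(Y, D)` is almost surely a function of
potential quantities, all of which are independent of `Z`.
-/

open MeasureTheory ProbabilityTheory

/-- Conditional probability `P(s | t)` as a real number. -/
noncomputable def pr {Ω : Type*} [MeasurableSpace Ω] (P : Measure Ω) (t s : Set Ω) : ℝ :=
  ((P[|t]) s).toReal

/-- Conditional expectation `E[f | t]` as a real number. -/
noncomputable def ce {Ω : Type*} [MeasurableSpace Ω] (P : Measure Ω) (t : Set Ω) (f : Ω → ℝ) : ℝ :=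
  ∫ ω, f ω ∂(P[|t])

/-- Always-takers. -/
def typeA {Ω : Type*} (D0 D1 : Ω → ℝ) : Set Ω := {ω | D0 ω = 1 ∧ D1 ω = 1}
/-- Never-takers. -/
def typeN {Ω : Type*} (D0 D1 : Ω → ℝ) : Set Ω := {ω | D0 ω = 0 ∧ D1 ω = 0}
/-- Compliers. -/
def typeC {Ω : Type*} (D0 D1 : Ω → ℝ) : Set Ω := {ω | D0 ω = 0 ∧ D1 ω = 1}
/-- Defiers. -/
def typeDF {Ω : Type*} (D0 D1 : Ω → ℝ) : Set Ω := {ω | D0 ω = 1 ∧ D1 ω = 0}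

section Observed

variable {R : Type*} [Ring R]

/-- Switching equation: the observed value of a variable with potential values `a` and `b`, when the
binary selector `d` equals `1` and `0` respectively. It turns the potential treatments into `D`
(selector `Z`) and the potential outcomes into `Y` (selectors `Z` and `D`). The polynomial
form makes sense for every `d`. -/
def observed (d a b : R) : R := a * d + b * (1 - d)

theorem observed_one (a b : R) : observed 1 a b = a := by
  simp [observed]

theorem observed_zero (a b : R) : observed 0 a b = b := by
  simp [observed]

theorem observed_self (d a : R) : observed d a a = a := by
  rw [observed, ← mul_add, add_sub_cancel, mul_one]

theorem observed_eventuallyEq {Ω : Type*} {l : Filter Ω} {a b : Ω → R} (d : Ω → R)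
    (h : a =ᶠ[l] b) : (fun ω ↦ observed (d ω) (a ω) (b ω)) =ᶠ[l] b := by
  filter_upwards [h] with ω hω
  rw [hω, observed_self]

end Observed

section Probability

variable {Ω α β γ : Type*} [MeasurableSpace Ω] [MeasurableSpace β] [MeasurableSpace γ]
  {P : Measure Ω}

theorem measure_fiber_ne_zero_of_measure_fiber_lt_one [IsProbabilityMeasure P] {Z : Ω → α} {a b : α}
    (hZ : ∀ ω, Z ω = a ∨ Z ω = b) (hlt : P {ω | Z ω = b} < 1) : P {ω | Z ω = a} ≠ 0 := by
  have hcover : {ω | Z ω = a} ∪ {ω | Z ω = b} = Set.univ := Set.eq_univ_of_forall hZ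
  intro h0
  refine hlt.not_ge ?_
  calc 1 = P ({ω | Z ω = a} ∪ {ω | Z ω = b}) := by rw [hcover, measure_univ]
    _ ≤ P {ω | Z ω = a} + P {ω | Z ω = b} := measure_union_le _ _
    _ = P {ω | Z ω = b} := by rw [h0, zero_add]

theorem pr_preimage_eq_real_of_indepFun [MeasurableSingletonClass γ] [IsFiniteMeasure P]
    {X X' : Ω → β} {Z : Ω → γ} {z : γ} (hZ : Measurable Z) (hz : P {ω | Z ω = z} ≠ 0)
    (hind : IndepFun X' Z P) (hX : Set.EqOn X X' {ω | Z ω = z}) {B : Set β}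
    (hB : MeasurableSet B) :
    pr P {ω | Z ω = z} (X ⁻¹' B) = P.real (X' ⁻¹' B) := by
  have hm : MeasurableSet {ω | Z ω = z} := hZ (measurableSet_singleton z)
  have hmul : P ({ω | Z ω = z} ∩ X' ⁻¹' B) = P {ω | Z ω = z} * P (X' ⁻¹' B) :=
    hind.symm.measure_inter_preimage_eq_mul {z} B (measurableSet_singleton z) hB
  rw [pr, cond_apply hm, hX.inter_preimage_eq, hmul,
    ENNReal.inv_mul_cancel_left hz (measure_ne_top _ _), measureReal_def]

theorem pr_preimage_eq_pr_preimage_of_indepFun [MeasurableSingletonClass γ] [IsFiniteMeasure P]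
    {X : Ω → β} {Z : Ω → γ} {z z' : γ} (hZ : Measurable Z) (hz : P {ω | Z ω = z} ≠ 0)
    (hz' : P {ω | Z ω = z'} ≠ 0) (hind : IndepFun X Z P) {B : Set β} (hB : MeasurableSet B) :
    pr P {ω | Z ω = z} (X ⁻¹' B) = pr P {ω | Z ω = z'} (X ⁻¹' B) :=
  (pr_preimage_eq_real_of_indepFun hZ hz hind (Set.eqOn_refl _ _) hB).trans
    (pr_preimage_eq_real_of_indepFun hZ hz' hind (Set.eqOn_refl _ _) hB).symm

theorem ae_eq_of_ae_le_of_measure_preimage_le [IsFiniteMeasure P] [PartialOrder α]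
    [MeasurableSpace α] [MeasurableSingletonClass α] {a b : α} {f g : Ω → α} (hab : a < b)
    (hfm : AEMeasurable f P) (hf : ∀ ω, f ω = a ∨ f ω = b) (hg : ∀ ω, g ω = a ∨ g ω = b)
    (hfg : f ≤ᵐ[P] g) (hgf : P (g ⁻¹' {b}) ≤ P (f ⁻¹' {b})) : f =ᵐ[P] g := by
  have hsub : (f ⁻¹' {b} : Set Ω) ≤ᵐ[P] g ⁻¹' {b} := by
    filter_upwards [hfg] with ω hω (hfb : f ω = b)
    exact (hg ω).resolve_left fun hga ↦ hab.not_ge (by rwa [hfb, hga] at hω)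
  have hset : (f ⁻¹' {b} : Set Ω) =ᵐ[P] g ⁻¹' {b} :=
    ae_eq_of_ae_subset_of_measure_ge hsub hgf
      (hfm.nullMeasurableSet_preimage (measurableSet_singleton b)) (measure_ne_top _ _)
  filter_upwards [hset.mem_iff] with ω (hω : f ω = b ↔ g ω = b)
  grind

theorem potential_treatments_ae_eq_of_pr_eq [IsFiniteMeasure P] {D0 D1 Z D : Ω → ℝ}
    (hD0m : AEMeasurable D0 P) (hD0b : ∀ ω, D0 ω = 0 ∨ D0 ω = 1)
    (hD1b : ∀ ω, D1 ω = 0 ∨ D1 ω = 1) (hle : D0 ≤ᵐ[P] D1) (hZ : Measurable Z)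
    (hZ0 : P {ω | Z ω = 0} ≠ 0) (hZ1 : P {ω | Z ω = 1} ≠ 0)
    (hind0 : IndepFun D0 Z P) (hind1 : IndepFun D1 Z P)
    (hD : ∀ ω, D ω = observed (Z ω) (D1 ω) (D0 ω))
    (heq : pr P {ω | Z ω = 1} {ω | D ω = 1} = pr P {ω | Z ω = 0} {ω | D ω = 1}) :
    D0 =ᵐ[P] D1 := by
  have hon1 : Set.EqOn D D1 {ω | Z ω = 1} := fun ω (h : Z ω = 1) ↦ by rw [hD, h, observed_one]
  have hon0 : Set.EqOn D D0 {ω | Z ω = 0} := fun ω (h : Z ω = 0) ↦ by rw [hD, h, observed_zero]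
  have hm : MeasurableSet ({1} : Set ℝ) := measurableSet_singleton 1
  have hreal : P.real (D1 ⁻¹' {1}) = P.real (D0 ⁻¹' {1}) :=
    calc P.real (D1 ⁻¹' {1}) = pr P {ω | Z ω = 1} (D ⁻¹' {1}) :=
          (pr_preimage_eq_real_of_indepFun hZ hZ1 hind1 hon1 hm).symm
      _ = pr P {ω | Z ω = 0} (D ⁻¹' {1}) := heq
      _ = P.real (D0 ⁻¹' {1}) := pr_preimage_eq_real_of_indepFun hZ hZ0 hind0 hon0 hm
  exact ae_eq_of_ae_le_of_measure_preimage_le zero_lt_one hD0m hD0b hD1b hle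
    ((ENNReal.toReal_le_toReal (measure_ne_top _ _) (measure_ne_top _ _)).mp hreal.le)

theorem indepFun_observed_prodMk {R : Type*} [Ring R] [MeasurableSpace R] [MeasurableAdd₂ R]
    [MeasurableSub R] [MeasurableMul₂ R] {Y1 Y0 D : Ω → R} {Z : Ω → γ}
    (h : IndepFun (fun ω ↦ (Y1 ω, Y0 ω, D ω)) Z P) :
    IndepFun (fun ω ↦ (observed (D ω) (Y1 ω) (Y0 ω), D ω)) Z P :=
  h.comp (φ := fun v : R × R × R ↦ (observed v.2.2 v.1 v.2.1, v.2.2)) (ψ := id)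
    (by unfold observed; fun_prop) measurable_id

end Probability

section Types

variable {Ω : Type*} [MeasurableSpace Ω] {P : Measure Ω} {D0 D1 D : Ω → ℝ}

theorem measure_typeC_eq_zero_of_ae_eq (h : D0 =ᵐ[P] D1) : P (typeC D0 D1) = 0 := by
  refine measure_eq_zero_iff_ae_notMem.mpr ?_
  filter_upwards [h] with ω hω ⟨h0, h1⟩
  linarith

theorem measure_typeDF_eq_zero_of_ae_eq (h : D0 =ᵐ[P] D1) : P (typeDF D0 D1) = 0 := by
  refine measure_eq_zero_iff_ae_notMem.mpr ?_
  filter_upwards [h] with ω hω ⟨h0, h1⟩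
  linarith

theorem typeA_ae_eq (h : D0 =ᵐ[P] D1) (hD : D =ᵐ[P] D0) :
    typeA D0 D1 =ᵐ[P] {ω | D ω = 1} := by
  filter_upwards [h, hD] with ω hω hDω
  change (D0 ω = 1 ∧ D1 ω = 1) = (D ω = 1)
  rw [hDω, ← hω, and_self]

theorem typeN_ae_eq (h : D0 =ᵐ[P] D1) (hD : D =ᵐ[P] D0) :
    typeN D0 D1 =ᵐ[P] {ω | D ω = 0} := by
  filter_upwards [h, hD] with ω hω hDω
  change (D0 ω = 0 ∧ D1 ω = 0) = (D ω = 0)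
  rw [hDω, ← hω, and_self]

end Types

theorem degenerate_first_stage
    {Ω : Type*} [MeasurableSpace Ω] (P : Measure Ω) [IsProbabilityMeasure P]
    (Y11 Y10 Y01 Y00 D0 D1 Z D Y : Ω → ℝ)
    (hY11m : Measurable Y11) (hY10m : Measurable Y10)
    (hY01m : Measurable Y01) (hY00m : Measurable Y00)
    (hD0m : Measurable D0) (hD1m : Measurable D1) (hZm : Measurable Z)
    (hD0b : ∀ ω, D0 ω = 0 ∨ D0 ω = 1) (hD1b : ∀ ω, D1 ω = 0 ∨ D1 ω = 1)
    (hZb : ∀ ω, Z ω = 0 ∨ Z ω = 1)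
    (hZpos : 0 < P {ω | Z ω = 1}) (hZlt : P {ω | Z ω = 1} < 1)
    (hDdef : ∀ ω, D ω = D1 ω * Z ω + D0 ω * (1 - Z ω))
    (hYdef : ∀ ω, Y ω = (Y11 ω * Z ω + Y10 ω * (1 - Z ω)) * D ω
        + (Y01 ω * Z ω + Y00 ω * (1 - Z ω)) * (1 - D ω))
    (RA : IndepFun (fun ω => (Y11 ω, Y10 ω, Y01 ω, Y00 ω, D0 ω, D1 ω)) Z P)
    (ER1 : ∀ᵐ ω ∂P, Y11 ω = Y10 ω) (ER0 : ∀ᵐ ω ∂P, Y01 ω = Y00 ω)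
    (MON : ∀ᵐ ω ∂P, D0 ω ≤ D1 ω)
    (heq : pr P {ω | Z ω = 1} {ω | D ω = 1} = pr P {ω | Z ω = 0} {ω | D ω = 1}) :
    (P (typeC D0 D1)).toReal = 0
  ∧ (P (typeDF D0 D1)).toReal = 0
  ∧ (P (typeA D0 D1)).toReal = (P {ω | D ω = 1}).toReal
  ∧ (P (typeN D0 D1)).toReal = (P {ω | D ω = 0}).toReal
  ∧ (∀ A : Set ℝ, MeasurableSet A → ∀ d : ℝ, d = 0 ∨ d = 1 →
      pr P {ω | Z ω = 1} {ω | Y ω ∈ A ∧ D ω = d}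
        = pr P {ω | Z ω = 0} {ω | Y ω ∈ A ∧ D ω = d})
  ∧ IndepFun (fun ω => (Y ω, D ω)) Z P := by
  have hZ0 : P {ω | Z ω = 0} ≠ 0 :=
    measure_fiber_ne_zero_of_measure_fiber_lt_one hZb hZlt
  have hbase : IndepFun (fun ω ↦ (Y10 ω, Y00 ω, D0 ω)) Z P :=
    RA.comp (φ := fun (_, y10, _, y00, d0, _) ↦ (y10, y00, d0)) (by fun_prop) measurable_id
  have hD1 : IndepFun D1 Z P :=
    RA.comp (φ := fun v : ℝ × ℝ × ℝ × ℝ × ℝ × ℝ ↦ v.2.2.2.2.2) (ψ := id) (by fun_prop) measurable_id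
  have hD0 : IndepFun D0 Z P :=
    hbase.comp (φ := fun v : ℝ × ℝ × ℝ ↦ v.2.2) (ψ := id) (by fun_prop) measurable_id
  have hDD : D0 =ᵐ[P] D1 := potential_treatments_ae_eq_of_pr_eq hD0m.aemeasurable hD0b hD1b MON
    hZm hZ0 hZpos.ne' hD0 hD1 hDdef heq
  have hD : D =ᵐ[P] D0 :=
    (Filter.EventuallyEq.of_eq (funext hDdef)).trans (observed_eventuallyEq Z hDD.symm)
  have hYD : IndepFun (fun ω ↦ (Y ω, D ω)) Z P := by
    refine (indepFun_observed_prodMk hbase).congr ?_ .rfl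
    filter_upwards [hD, observed_eventuallyEq Z ER1, observed_eventuallyEq Z ER0] with ω h h1 h0
    rw [← h, ← h1, ← h0, hYdef]
    simp only [observed]
  refine ⟨by simp [measure_typeC_eq_zero_of_ae_eq hDD],
    by simp [measure_typeDF_eq_zero_of_ae_eq hDD], measureReal_congr (typeA_ae_eq hDD hD),
    measureReal_congr (typeN_ae_eq hDD hD), fun A hA d _ ↦ ?_, hYD⟩
  exact pr_preimage_eq_pr_preimage_of_indepFun hZm hZpos.ne' hZ0 hYD
    (hA.prod (measurableSet_singleton d))
end

section
/- Assume RA and ER, and suppose the outcome is binary: Y₁ and Y₀ take values in {0,1} almost surely. (i) If p_a > 0, then max{ (P(Y=1, D=1 | Z=1) − p_c)/p_a, (P(Y=1, D=1 | Z=0) − p_df)/p_a, 0 } ≤ E[Y₁ | T=a] ≤ min{ P(Y=1, D=1 | Z=1)/p_a, P(Y=1, D=1 | Z=0)/p_a, 1 }. (ii) If p_n > 0, then max{ (P(Y=1, D=0 | Z=0) − p_c)/p_n, (P(Y=1, D=0 | Z=1) − p_df)/p_n, 0 } ≤ E[Y₀ | T=n] ≤ min{ P(Y=1, D=0 | Z=0)/p_n,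 P(Y=1, D=0 | Z=1)/p_n, 1 }. -/
open MeasureTheory ProbabilityTheory

/-!
Let `W` be the potential outcome under treatment status `d`, and let `V` be the potential treatment
under an instrument value `z`. Within the arm `Z = z`, the observed event `Y = 1, D = d` is
`W = 1, V = d`, whose probability random assignment makes unconditional. The event `V = d` is the
union of the type `T` that takes `d` in both arms and the type `C` that takes `d` only in this one,
so `P(W = 1, T) ≤ P(Y = 1, D = d ∣ Z = z) ≤ P(W = 1, T) + P(C)`. Dividing by `P(T)` bounds
`E[W ∣ T]`, and each value of the instrument contributes one such pair of bounds.
-/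

section Conditioning

variable {Ω : Type*} [MeasurableSpace Ω] {P : Measure Ω} {A B T : Set Ω} {W : Ω → ℝ}

lemma pr_eq_div (hT : MeasurableSet T) : pr P T A = P.real (T ∩ A) / P.real T := by
  rw [pr, cond_apply hT, ENNReal.toReal_mul, ENNReal.toReal_inv, ← div_eq_inv_mul]
  rfl

lemma pr_congr (hT : MeasurableSet T) (h : ∀ᵐ ω ∂P, ω ∈ T → (ω ∈ A ↔ ω ∈ B)) :
    pr P T A = pr P T B := by
  have hAB : (T ∩ A : Set Ω) =ᵐ[P] (T ∩ B : Set Ω) :=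
    h.mono fun ω hω => propext (and_congr_right hω)
  rw [pr_eq_div hT, pr_eq_div hT, measureReal_congr hAB]

lemma pr_eq_measureReal_of_indepSet [IsFiniteMeasure P] (hT : MeasurableSet T) (hT0 : P T ≠ 0)
    (hTA : IndepSet T A P) : pr P T A = P.real A := by
  have hmul : P.real (T ∩ A) = P.real T * P.real A := by
    simp only [measureReal_def, hTA.measure_inter_eq_mul, ENNReal.toReal_mul]
  have hT0' : P.real T ≠ 0 := (measureReal_ne_zero_iff (measure_ne_top P T)).2 hT0
  rw [pr_eq_div hT, hmul, mul_div_cancel_left₀ _ hT0']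

lemma ce_eq_pr (hW : AEMeasurable W P) (hWb : ∀ᵐ ω ∂P, W ω = 0 ∨ W ω = 1) :
    ce P T W = pr P T {ω | W ω = 1} :=
  integral_of_ae_eq_zero_or_one (hW.mono_ac cond_absolutelyContinuous)
    (cond_absolutelyContinuous.ae_le hWb)

lemma ce_mem_Icc_zero_one (hW : AEMeasurable W P) (hWb : ∀ᵐ ω ∂P, W ω = 0 ∨ W ω = 1) :
    ce P T W ∈ Set.Icc 0 1 := by
  rw [ce_eq_pr hW hWb]
  exact ⟨measureReal_nonneg, measureReal_le_one⟩

lemma pr_mem_Icc_measureReal_inter_union [IsFiniteMeasure P] {C : Set Ω} (hT : MeasurableSet T) :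
    pr P T A ∈ Set.Icc ((P.real (A ∩ (T ∪ C)) - P.real C) / P.real T)
      (P.real (A ∩ (T ∪ C)) / P.real T) := by
  have lower : P.real (A ∩ (T ∪ C)) ≤ P.real (T ∩ A) + P.real C :=
    calc
      P.real (A ∩ (T ∪ C)) ≤ P.real (T ∩ A ∪ C) :=
        measureReal_mono fun ω ⟨hA, hTC⟩ => hTC.imp_left fun hT => ⟨hT, hA⟩
      _ ≤ P.real (T ∩ A) + P.real C := measureReal_union_le _ _
  have upper : P.real (T ∩ A) ≤ P.real (A ∩ (T ∪ C)) :=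
    measureReal_mono fun ω ⟨hT, hA⟩ => ⟨hA, .inl hT⟩
  rw [pr_eq_div hT]
  exact ⟨by gcongr; linarith, by gcongr⟩

end Conditioning

section RandomAssignment

variable {Ω α β γ : Type*} [MeasurableSpace Ω] {P : Measure Ω} [IsFiniteMeasure P]
  [MeasurableSpace α] [MeasurableSingletonClass α]
  [MeasurableSpace β] [MeasurableSingletonClass β]
  [MeasurableSpace γ] [MeasurableSingletonClass γ] {Z : Ω → γ} {z : γ}

lemma pr_observed_eq_measureReal_potential {Y W : Ω → α} {D V : Ω → β} {y : α} {d : β}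
    (hZ : Measurable Z) (hWVZ : IndepFun (fun ω => (W ω, V ω)) Z P) (hz : P {ω | Z ω = z} ≠ 0)
    (hD : ∀ᵐ ω ∂P, Z ω = z → D ω = V ω) (hY : ∀ᵐ ω ∂P, Z ω = z → D ω = d → Y ω = W ω) :
    pr P {ω | Z ω = z} {ω | Y ω = y ∧ D ω = d} = P.real ({ω | W ω = y} ∩ {ω | V ω = d}) := by
  have hZz : MeasurableSet {ω | Z ω = z} := hZ (measurableSet_singleton z)
  have consistency : ∀ᵐ ω ∂P, Z ω = z → (Y ω = y ∧ D ω = d ↔ W ω = y ∧ V ω = d) := by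
    filter_upwards [hD, hY] with ω hDV hYW hω
    rw [← hDV hω]
    exact and_congr_left fun hd => by rw [hYW hω hd]
  have indep : IndepSet {ω | Z ω = z} ({ω | W ω = y} ∩ {ω | V ω = d}) P :=
    Indep.indepSet_of_measurableSet hWVZ.symm ⟨{z}, measurableSet_singleton z, rfl⟩
      ⟨{y} ×ˢ {d}, (measurableSet_singleton y).prod (measurableSet_singleton d), rfl⟩
  exact (pr_congr hZz consistency).trans (pr_eq_measureReal_of_indepSet hZz hz indep)

theorem ce_mem_Icc_of_arm {Y W : Ω → ℝ} {D V : Ω → β} {d : β} {T C : Set Ω}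
    (hW : AEMeasurable W P) (hWb : ∀ᵐ ω ∂P, W ω = 0 ∨ W ω = 1) (hT : MeasurableSet T)
    (hV : T ∪ C = {ω | V ω = d})
    (hZ : Measurable Z) (hWVZ : IndepFun (fun ω => (W ω, V ω)) Z P) (hz : P {ω | Z ω = z} ≠ 0)
    (hD : ∀ᵐ ω ∂P, Z ω = z → D ω = V ω) (hY : ∀ᵐ ω ∂P, Z ω = z → D ω = d → Y ω = W ω) :
    ce P T W ∈ Set.Icc ((pr P {ω | Z ω = z} {ω | Y ω = 1 ∧ D ω = d} - P.real C) / P.real T)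
      (pr P {ω | Z ω = z} {ω | Y ω = 1 ∧ D ω = d} / P.real T) := by
  rw [ce_eq_pr hW hWb, pr_observed_eq_measureReal_potential hZ hWVZ hz hD hY, ← hV]
  exact pr_mem_Icc_measureReal_inter_union hT

end RandomAssignment

section Types

variable {Ω : Type*} {D0 D1 : Ω → ℝ}

lemma typeA_union_typeC (h : ∀ ω, D0 ω = 0 ∨ D0 ω = 1) :
    typeA D0 D1 ∪ typeC D0 D1 = {ω | D1 ω = 1} := by
  ext ω
  have := h ω
  simp only [typeA, typeC, Set.mem_union, Set.mem_ofPred_eq]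
  tauto

lemma typeA_union_typeDF (h : ∀ ω, D1 ω = 0 ∨ D1 ω = 1) :
    typeA D0 D1 ∪ typeDF D0 D1 = {ω | D0 ω = 1} := by
  ext ω
  have := h ω
  simp only [typeA, typeDF, Set.mem_union, Set.mem_ofPred_eq]
  tauto

lemma typeN_union_typeC (h : ∀ ω, D1 ω = 0 ∨ D1 ω = 1) :
    typeN D0 D1 ∪ typeC D0 D1 = {ω | D0 ω = 0} := by
  ext ω
  have := h ω
  simp only [typeN, typeC, Set.mem_union, Set.mem_ofPred_eq]
  tauto

lemma typeN_union_typeDF (h : ∀ ω, D0 ω = 0 ∨ D0 ω = 1) :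
    typeN D0 D1 ∪ typeDF D0 D1 = {ω | D1 ω = 0} := by
  ext ω
  have := h ω
  simp only [typeN, typeDF, Set.mem_union, Set.mem_ofPred_eq]
  tauto

variable [MeasurableSpace Ω]

lemma measurableSet_typeA (h0 : Measurable D0) (h1 : Measurable D1) :
    MeasurableSet (typeA D0 D1) :=
  (h0 (measurableSet_singleton 1)).inter (h1 (measurableSet_singleton 1))

lemma measurableSet_typeN (h0 : Measurable D0) (h1 : Measurable D1) :
    MeasurableSet (typeN D0 D1) :=
  (h0 (measurableSet_singleton 0)).inter (h1 (measurableSet_singleton 0))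

end Types

lemma measure_setOf_eq_ne_zero_of_ae_eq_or_eq {Ω α : Type*} [MeasurableSpace Ω] {P : Measure Ω}
    [IsProbabilityMeasure P] {Z : Ω → α} {a b : α} (hZ : ∀ᵐ ω ∂P, Z ω = a ∨ Z ω = b)
    (hb : P {ω | Z ω = b} < 1) : P {ω | Z ω = a} ≠ 0 := by
  intro ha
  have hZb : ∀ᵐ ω ∂P, Z ω = b := by
    filter_upwards [hZ, measure_eq_zero_iff_ae_notMem.1 ha] with ω h hne
    exact h.resolve_left hne
  exact hb.ne ((measure_congr (Filter.eventuallyEq_univ.2 hZb)).trans measure_univ)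

theorem binary_outcome_bounds
    {Ω : Type*} [MeasurableSpace Ω] (P : Measure Ω) [IsProbabilityMeasure P]
    (Y11 Y10 Y01 Y00 D0 D1 Z D Y : Ω → ℝ)
    (hY11m : Measurable Y11) (hY10m : Measurable Y10)
    (hY01m : Measurable Y01) (hY00m : Measurable Y00)
    (hD0m : Measurable D0) (hD1m : Measurable D1) (hZm : Measurable Z)
    (hD0b : ∀ ω, D0 ω = 0 ∨ D0 ω = 1) (hD1b : ∀ ω, D1 ω = 0 ∨ D1 ω = 1)
    (hZb : ∀ ω, Z ω = 0 ∨ Z ω = 1)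
    (hZpos : 0 < P {ω | Z ω = 1}) (hZlt : P {ω | Z ω = 1} < 1)
    (hDdef : ∀ ω, D ω = D1 ω * Z ω + D0 ω * (1 - Z ω))
    (hYdef : ∀ ω, Y ω = (Y11 ω * Z ω + Y10 ω * (1 - Z ω)) * D ω
        + (Y01 ω * Z ω + Y00 ω * (1 - Z ω)) * (1 - D ω))
    (RA : IndepFun (fun ω => (Y11 ω, Y10 ω, Y01 ω, Y00 ω, D0 ω, D1 ω)) Z P)
    (ER1 : ∀ᵐ ω ∂P, Y11 ω = Y10 ω) (ER0 : ∀ᵐ ω ∂P, Y01 ω = Y00 ω)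
    (hY1b : ∀ᵐ ω ∂P, Y11 ω = 0 ∨ Y11 ω = 1)
    (hY0b : ∀ᵐ ω ∂P, Y00 ω = 0 ∨ Y00 ω = 1)
    (pa pn pc pdf : ℝ)
    (hpa : pa = (P (typeA D0 D1)).toReal) (hpn : pn = (P (typeN D0 D1)).toReal)
    (hpc : pc = (P (typeC D0 D1)).toReal) (hpdf : pdf = (P (typeDF D0 D1)).toReal) :
    (0 < pa →
      max (max ((pr P {ω | Z ω = 1} {ω | Y ω = 1 ∧ D ω = 1} - pc) / pa)
              ((pr P {ω | Z ω = 0} {ω | Y ω = 1 ∧ D ω = 1} - pdf) / pa)) 0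
        ≤ ce P (typeA D0 D1) Y11
      ∧ ce P (typeA D0 D1) Y11
        ≤ min (min (pr P {ω | Z ω = 1} {ω | Y ω = 1 ∧ D ω = 1} / pa)
                  (pr P {ω | Z ω = 0} {ω | Y ω = 1 ∧ D ω = 1} / pa)) 1)
  ∧ (0 < pn →
      max (max ((pr P {ω | Z ω = 0} {ω | Y ω = 1 ∧ D ω = 0} - pc) / pn)
              ((pr P {ω | Z ω = 1} {ω | Y ω = 1 ∧ D ω = 0} - pdf) / pn)) 0
        ≤ ce P (typeN D0 D1) Y00
      ∧ ce P (typeN D0 D1) Y00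
        ≤ min (min (pr P {ω | Z ω = 0} {ω | Y ω = 1 ∧ D ω = 0} / pn)
                  (pr P {ω | Z ω = 1} {ω | Y ω = 1 ∧ D ω = 0} / pn)) 1) := by
  have hZ0 : P {ω | Z ω = 0} ≠ 0 :=
    measure_setOf_eq_ne_zero_of_ae_eq_or_eq (.of_forall hZb) hZlt
  have hTA := measurableSet_typeA hD0m hD1m
  have hTN := measurableSet_typeN hD0m hD1m
  have arm1 : ∀ᵐ ω ∂P, Z ω = 1 → D ω = D1 ω := .of_forall fun ω hz => by simp [hDdef, hz]
  have arm0 : ∀ᵐ ω ∂P, Z ω = 0 → D ω = D0 ω := .of_forall fun ω hz => by simp [hDdef, hz]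
  have a1 := ce_mem_Icc_of_arm hY11m.aemeasurable hY1b hTA (typeA_union_typeC hD0b) hZm
    (RA.comp (φ := fun x => (x.1, x.2.2.2.2.2)) (by fun_prop) measurable_id) hZpos.ne' arm1
    (Y := Y) (.of_forall fun ω hz hd => by simp [hYdef, hz, hd])
  have a0 := ce_mem_Icc_of_arm hY11m.aemeasurable hY1b hTA (typeA_union_typeDF hD1b) hZm
    (RA.comp (φ := fun x => (x.1, x.2.2.2.2.1)) (by fun_prop) measurable_id) hZ0 arm0
    (Y := Y) (ER1.mono fun ω her hz hd => by simp [hYdef, hz, hd, her])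
  have n0 := ce_mem_Icc_of_arm hY00m.aemeasurable hY0b hTN (typeN_union_typeC hD1b) hZm
    (RA.comp (φ := fun x => (x.2.2.2.1, x.2.2.2.2.1)) (by fun_prop) measurable_id) hZ0 arm0
    (Y := Y) (.of_forall fun ω hz hd => by simp [hYdef, hz, hd])
  have n1 := ce_mem_Icc_of_arm hY00m.aemeasurable hY0b hTN (typeN_union_typeDF hD0b) hZm
    (RA.comp (φ := fun x => (x.2.2.2.1, x.2.2.2.2.2)) (by fun_prop) measurable_id) hZpos.ne' arm1
    (Y := Y) (ER0.mono fun ω her hz hd => by simp [hYdef, hz, hd, her])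
  obtain ⟨a_nonneg, a_le_one⟩ := ce_mem_Icc_zero_one (T := typeA D0 D1) hY11m.aemeasurable hY1b
  obtain ⟨n_nonneg, n_le_one⟩ := ce_mem_Icc_zero_one (T := typeN D0 D1) hY00m.aemeasurable hY0b
  subst hpa hpn hpc hpdf
  exact ⟨fun _ => ⟨max_le (max_le a1.1 a0.1) a_nonneg, le_min (le_min a1.2 a0.2) a_le_one⟩,
    fun _ => ⟨max_le (max_le n0.1 n1.1) n_nonneg, le_min (le_min n0.2 n1.2) n_le_one⟩⟩
end
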